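/- Let F(x) = |x| φ(x) where φ ∈ C_c^∞(ℝ^d). Then the Fourier transform of F is integrable: F̂ ∈ L^1(ℝ^d); consequently F belongs to the Wiener algebra W_0(ℝ^d) = {ρ̂ : ρ ∈ L^1(ℝ^d)}. -/

import Mathlib

open MeasureTheory
open scoped FourierTransform

/-!
If `f` is smooth away from the origin and `f (r • x) = c • f x` with `1 < r` and `1 < ‖c‖` (for the
norm, `r = c = 2`), let `G = χ f` with a smooth compactly supported cutoff `χ` equal to `1` near the
origin. Then `H x = G x - c⁻¹ • G (r • x) = (χ x - χ (r • x)) • f x` vanishes near the origin, so it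
is a test function, hence the Fourier transform of some `g ∈ L¹`. Iterating,
`G x = ∑ k, c⁻¹ ^ k • H (r ^ k • x)`, where `x ↦ H (r ^ k • x)` is the Fourier transform of a
dilate of `g` with the same `L¹` norm; so the series of preimages converges in `L¹`, geometrically.
A product `φ f` equals `φ G` if `χ = 1` on the support of `φ`, and products correspond to
convolutions. Finally, by Fourier inversion the `L¹` preimage of an integrable function is, up to
reflection, its Fourier transform.
-/

open Filter Topology Module
open scoped ContDiff SchwartzMap

section Cutoff

variable {V E Y : Type*} [NormedAddCommGroup V] [NormedSpace ℝ V] [NormedAddCommGroup E]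
  [NormedSpace ℝ E]

theorem contDiff_smul_of_eventuallyEq_zero {n : WithTop ℕ∞} {f : V → E} {η : V → ℝ}
    (hf : ∀ x ≠ 0, ContDiffAt ℝ n f x) (hη : ContDiff ℝ n η) (hη_zero : η =ᶠ[𝓝 0] 0) :
    ContDiff ℝ n fun x ↦ η x • f x := by
  refine contDiff_iff_contDiffAt.2 fun x ↦ ?_
  obtain rfl | hx := eq_or_ne x 0
  · refine (contDiffAt_const (c := (0 : E))).congr_of_eventuallyEq ?_
    filter_upwards [hη_zero] with y hy
    rw [hy, Pi.zero_apply, zero_smul]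
  · exact hη.contDiffAt.smul (hf x hx)

theorem exists_contDiffBump_smul_eq_self [HasContDiffBump V] {φ : V → E}
    (hφ_supp : HasCompactSupport φ) : ∃ χ : ContDiffBump (0 : V), ∀ x, χ x • φ x = φ x := by
  obtain ⟨R, hR₀, hR⟩ := hφ_supp.isCompact.isBounded.subset_closedBall_lt 0 0
  refine ⟨⟨R, R + 1, hR₀, lt_add_one R⟩, fun x ↦ ?_⟩
  by_cases hx : x ∈ tsupport φ
  · rw [ContDiffBump.one_of_mem_closedBall _ (hR hx), one_smul]
  · rw [image_eq_zero_of_notMem_tsupport hx, smul_zero]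

theorem eventually_comp_pow_smul_eq_zero [ProperSpace V] [Zero Y] {G : V → Y} {r : ℝ}
    (hr : 1 < r) (hG : G 0 = 0) (hG_supp : HasCompactSupport G) (x : V) :
    ∀ᶠ n : ℕ in atTop, G (r ^ n • x) = 0 := by
  obtain rfl | hx := eq_or_ne x 0
  · simp [hG]
  have h_norm : Tendsto (fun n : ℕ ↦ ‖r ^ n • x‖) atTop atTop := by
    simp only [norm_smul, norm_pow, Real.norm_of_nonneg (zero_le_one.trans hr.le)]
    exact (tendsto_pow_atTop_atTop_of_one_lt hr).atTop_mul_const (norm_pos_iff.2 hx)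
  have h_cocompact : Tendsto (fun n : ℕ ↦ r ^ n • x) atTop (coclosedCompact V) := by
    rwa [coclosedCompact_eq_cocompact, ← Metric.cobounded_eq_cocompact,
      ← tendsto_norm_atTop_iff_cobounded]
  exact h_cocompact.eventually (hasCompactSupport_iff_eventuallyEq.1 hG_supp)

end Cutoff

section WienerAlgebra

variable {V E : Type*} [NormedAddCommGroup V] [InnerProductSpace ℝ V] [FiniteDimensional ℝ V]
  [MeasurableSpace V] [BorelSpace V] [NormedAddCommGroup E] [NormedSpace ℂ E]

/-- Membership in the Wiener algebra `W₀` of Fourier transforms of integrable functions, here with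
values in a normed space `E`. Mathlib's kernel `exp (-2πi ⟪ξ, x⟫)` gives the same class as
`exp (-i ⟪ξ, x⟫)`, by rescaling `ρ`. -/
def MemWiener (F : V → E) : Prop :=
  ∃ ρ : V → E, Integrable ρ ∧ 𝓕 ρ = F

theorem MemWiener.continuous {F : V → E} (hF : MemWiener F) : Continuous F := by
  obtain ⟨ρ, hρ, rfl⟩ := hF
  exact VectorFourier.fourierIntegral_continuous Real.continuous_fourierChar continuous_inner hρ

theorem MemWiener.smul [CompleteSpace E] {φ : V → ℂ} {F : V → E} (hφ : MemWiener φ)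
    (hF : MemWiener F) : MemWiener fun x ↦ φ x • F x := by
  obtain ⟨ρ, hρ, rfl⟩ := hφ
  obtain ⟨σ, hσ, rfl⟩ := hF
  exact ⟨_, hρ.integrable_convolution (.lsmul ℂ ℂ) hσ,
    funext (Real.fourier_smul_convolution_eq hρ hσ)⟩

theorem memWiener_of_contDiff [CompleteSpace E] {F : V → E} (hF : ContDiff ℝ ∞ F)
    (hF_supp : HasCompactSupport F) : MemWiener F := by
  let S : 𝓢(V, E) := hF_supp.toSchwartzMap hF
  refine ⟨(𝓕⁻ S : 𝓢(V, E)), (𝓕⁻ S).integrable, ?_⟩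
  rw [← SchwartzMap.fourier_coe, FourierTransform.fourier_fourierInv_eq]
  rfl

theorem memWiener_of_tendsto_sum [CompleteSpace E] {ρ : ℕ → V → E} {F : V → E}
    (hρ : ∀ k, Integrable (ρ k)) (hρ_sum : Summable fun k ↦ ∫ ξ, ‖ρ k ξ‖)
    (hF : ∀ x, Tendsto (fun n ↦ ∑ k ∈ Finset.range n, 𝓕 (ρ k) x) atTop (𝓝 (F x))) :
    MemWiener F := by
  let u : ℕ → V →₁[volume] E := fun k ↦ (hρ k).toL1
  have hu : Summable u := by
    refine .of_norm ?_
    simpa only [u, L1.norm_of_fun_eq_integral_norm] using hρ_sum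
  have h𝓕u : HasSum (fun k ↦ Real.Lp.fourierTransformCLM V E (u k))
      (Real.Lp.fourierTransformCLM V E (∑' k, u k)) := hu.hasSum.mapL _
  refine ⟨_, L1.integrable_coeFn (∑' k, u k), funext fun x ↦ ?_⟩
  have h𝓕u_apply (k : ℕ) : Real.Lp.fourierTransformCLM V E (u k) x = 𝓕 (ρ k) x :=
    Real.fourier_congr_ae (hρ k).coeFn_toL1 x
  have hx := (h𝓕u.mapL (BoundedContinuousFunction.evalCLM ℂ x)).tendsto_sum_nat
  simp only [BoundedContinuousFunction.evalCLM_apply, h𝓕u_apply] at hx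
  exact tendsto_nhds_unique hx (hF x)

section Dilation

/-- The `L¹`-normalised dilate `ξ ↦ |r|^(-dim V) ρ (ξ / r)`, whose Fourier transform is
`x ↦ 𝓕 ρ (r • x)`. -/
noncomputable def normalizedDilate (r : ℝ) (ρ : V → E) (ξ : V) : E :=
  |r ^ finrank ℝ V|⁻¹ • ρ (r⁻¹ • ξ)

variable {r : ℝ} (hr : r ≠ 0)
include hr

theorem integrable_normalizedDilate {ρ : V → E} (hρ : Integrable ρ) :
    Integrable (normalizedDilate r ρ) :=
  (hρ.comp_smul (inv_ne_zero hr)).smul _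

theorem integral_normalizedDilate (ρ : V → E) : ∫ ξ, normalizedDilate r ρ ξ = ∫ ξ, ρ ξ := by
  have hr' : |r ^ finrank ℝ V| ≠ 0 := abs_ne_zero.2 (pow_ne_zero _ hr)
  simp only [normalizedDilate, integral_smul, Measure.integral_comp_inv_smul, inv_smul_smul₀ hr']

theorem integral_norm_normalizedDilate (ρ : V → E) :
    ∫ ξ, ‖normalizedDilate r ρ ξ‖ = ∫ ξ, ‖ρ ξ‖ := by
  have hr' : |r ^ finrank ℝ V| ≠ 0 := abs_ne_zero.2 (pow_ne_zero _ hr)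
  simp only [normalizedDilate, norm_smul, norm_inv, Real.norm_eq_abs, abs_abs, integral_const_mul,
    Measure.integral_comp_inv_smul volume (fun ξ ↦ ‖ρ ξ‖), smul_eq_mul, inv_mul_cancel_left₀ hr']

theorem fourier_normalizedDilate (ρ : V → E) (x : V) :
    𝓕 (normalizedDilate r ρ) x = 𝓕 ρ (r • x) := by
  rw [Real.fourier_eq, Real.fourier_eq,
    ← integral_normalizedDilate hr fun ξ ↦ Real.fourierChar (-inner ℝ ξ (r • x)) • ρ ξ]
  congr with ξ
  rw [normalizedDilate, normalizedDilate, smul_comm, real_inner_smul_left, real_inner_smul_right,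
    inv_mul_cancel_left₀ hr]

end Dilation

theorem memWiener_of_sub_comp_smul [CompleteSpace E] {G : V → E} {r : ℝ} {c : ℂ} (hr : r ≠ 0)
    (hc : 1 < ‖c‖) (hG : MemWiener fun x ↦ G x - c⁻¹ • G (r • x))
    (hG_lim : ∀ x, Tendsto (fun n : ℕ ↦ c⁻¹ ^ n • G (r ^ n • x)) atTop (𝓝 0)) :
    MemWiener G := by
  obtain ⟨ρ, hρ, h𝓕ρ⟩ := hG
  have hrk (k : ℕ) : r ^ k ≠ 0 := pow_ne_zero k hr
  refine memWiener_of_tendsto_sum (ρ := fun k ↦ c⁻¹ ^ k • normalizedDilate (r ^ k) ρ)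
    (fun k ↦ (integrable_normalizedDilate (hrk k) hρ).smul _) ?_ fun x ↦ ?_
  · have hc_inv : ‖c‖⁻¹ < 1 := inv_lt_one_of_one_lt₀ hc
    simpa only [Pi.smul_apply, norm_smul, norm_pow, norm_inv, integral_const_mul,
      integral_norm_normalizedDilate (hrk _)] using
        (summable_geometric_of_lt_one (by positivity) hc_inv).mul_right (∫ ξ, ‖ρ ξ‖)
  · have h𝓕 (k : ℕ) : 𝓕 (c⁻¹ ^ k • normalizedDilate (r ^ k) ρ) x =
        c⁻¹ ^ k • G (r ^ k • x) - c⁻¹ ^ (k + 1) • G (r ^ (k + 1) • x) := by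
      calc 𝓕 (c⁻¹ ^ k • normalizedDilate (r ^ k) ρ) x
          = c⁻¹ ^ k • 𝓕 (normalizedDilate (r ^ k) ρ) x :=
            congrFun (VectorFourier.fourierIntegral_const_smul _ _ _ _ _) x
        _ = c⁻¹ ^ k • (G (r ^ k • x) - c⁻¹ • G (r • r ^ k • x)) := by
            rw [fourier_normalizedDilate (hrk k), h𝓕ρ]
        _ = _ := by rw [smul_sub, smul_smul, smul_smul, ← pow_succ, ← pow_succ']
    simp only [h𝓕, Finset.sum_range_sub']
    simpa using (hG_lim x).const_sub (G x)

section Inversion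

variable [CompleteSpace E]

theorem integral_fourier_smul {f : V → ℂ} {g : V → E} (hf : Integrable f) (hg : Integrable g) :
    ∫ x, 𝓕 f x • g x = ∫ x, f x • 𝓕 g x := by
  simpa only [flip_innerₗ] using! VectorFourier.integral_fourierIntegral_smul_eq_flip
    (L := innerₗ V) Real.continuous_fourierChar continuous_inner hf hg

theorem integral_fourierInv_smul {f : V → ℂ} {g : V → E} (hf : Integrable f)
    (hg : Integrable g) : ∫ x, 𝓕⁻ f x • g x = ∫ x, f x • 𝓕⁻ g x := by
  calc ∫ x, 𝓕⁻ f x • g x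
      = ∫ x, 𝓕 f x • g (-x) := by
        rw [← integral_neg_eq_self]
        simp only [Real.fourierInv_eq_fourier_neg, neg_neg]
    _ = ∫ x, f x • 𝓕⁻ g x := by
        rw [integral_fourier_smul hf hg.comp_neg, Real.fourierInv_eq_fourier_comp_neg]

theorem fourierInv_fourier_ae_eq {ρ : V → E} (hρ : Integrable ρ) (h𝓕ρ : Integrable (𝓕 ρ)) :
    𝓕⁻ (𝓕 ρ) =ᵐ[volume] ρ := by
  have h_cont : Continuous (𝓕⁻ (𝓕 ρ)) := by
    rw [Real.fourierInv_eq_fourier_comp_neg]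
    exact MemWiener.continuous ⟨_, h𝓕ρ.comp_neg, rfl⟩
  refine ae_eq_of_integral_contDiff_smul_eq h_cont.locallyIntegrable hρ.locallyIntegrable
    fun g hg hg_supp ↦ ?_
  let S : 𝓢(V, ℂ) := (hg_supp.comp_left Complex.ofReal_zero).toSchwartzMap
    (Complex.ofRealCLM.contDiff.comp hg)
  have hS : 𝓕 (𝓕⁻ (S : V → ℂ)) = S := by
    rw [← SchwartzMap.fourierInv_coe, ← SchwartzMap.fourier_coe,
      FourierTransform.fourier_fourierInv_eq]
  have hS_inv : Integrable (𝓕⁻ (S : V → ℂ)) := by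
    rw [← SchwartzMap.fourierInv_coe]
    exact (𝓕⁻ S).integrable
  calc ∫ x, g x • 𝓕⁻ (𝓕 ρ) x
      = ∫ x, S x • 𝓕⁻ (𝓕 ρ) x := rfl
    _ = ∫ x, 𝓕⁻ (S : V → ℂ) x • 𝓕 ρ x := (integral_fourierInv_smul S.integrable h𝓕ρ).symm
    _ = ∫ x, 𝓕 (𝓕⁻ (S : V → ℂ)) x • ρ x := (integral_fourier_smul hS_inv hρ).symm
    _ = ∫ x, g x • ρ x := by rw [hS]; rfl

theorem MemWiener.integrable_fourier {F : V → E} (hF : MemWiener F) (hF_int : Integrable F) :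
    Integrable (𝓕 F) := by
  obtain ⟨ρ, hρ, rfl⟩ := hF
  have h_inv : Integrable (𝓕⁻ (𝓕 ρ)) := hρ.congr (fourierInv_fourier_ae_eq hρ hF_int).symm
  simpa only [Real.fourierInv_eq_fourier_neg, neg_neg] using h_inv.comp_neg

end Inversion

section Homogeneous

variable {f : V → E} {r : ℝ} {c : ℂ}

theorem memWiener_smul_of_homogeneous [CompleteSpace E] {χ : V → ℝ} (hr : 1 < r) (hc : 1 < ‖c‖)
    (hf : ∀ x ≠ 0, ContDiffAt ℝ ∞ f x) (hf_hom : ∀ x, f (r • x) = c • f x)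
    (hχ : ContDiff ℝ ∞ χ) (hχ_supp : HasCompactSupport χ) (hχ_one : χ =ᶠ[𝓝 0] 1) :
    MemWiener fun x ↦ χ x • f x := by
  have hr₀ : r ≠ 0 := (zero_lt_one.trans hr).ne'
  have hc₀ : c ≠ 0 := norm_pos_iff.1 (zero_lt_one.trans hc)
  have hf_zero : f 0 = 0 := by
    have hc₁ : c ≠ 1 := by rintro rfl; simp at hc
    have h_fix : (c - 1) • f 0 = 0 := by rw [sub_smul, one_smul, ← hf_hom, smul_zero, sub_self]
    exact (smul_eq_zero.1 h_fix).resolve_left (sub_ne_zero.2 hc₁)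
  let η : V → ℝ := fun x ↦ χ x - χ (r • x)
  have hη : ContDiff ℝ ∞ η := hχ.sub (hχ.comp (contDiff_const_smul r))
  have hη_supp : HasCompactSupport η :=
    hχ_supp.sub (hχ_supp.comp_homeomorph (.smulOfNeZero r hr₀))
  have hη_zero : η =ᶠ[𝓝 0] 0 := by
    have h_scale : Tendsto (fun x : V ↦ r • x) (𝓝 0) (𝓝 0) :=
      (continuous_const_smul r).tendsto' 0 0 (smul_zero r)
    filter_upwards [hχ_one, h_scale.eventually hχ_one] with x hx hrx
    simp [η, hx, hrx]
  have h_test : MemWiener fun x ↦ η x • f x :=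
    memWiener_of_contDiff (contDiff_smul_of_eventuallyEq_zero hf hη hη_zero) hη_supp.smul_right
  refine memWiener_of_sub_comp_smul hr₀ hc ?_ fun x ↦ tendsto_const_nhds.congr' ?_
  · convert h_test using 2 with x
    rw [hf_hom, smul_comm c⁻¹, inv_smul_smul₀ hc₀, sub_smul]
  · have h_supp : HasCompactSupport fun x ↦ χ x • f x := hχ_supp.smul_right
    filter_upwards [eventually_comp_pow_smul_eq_zero hr (by simp [hf_zero]) h_supp x] with n hn
    rw [hn, smul_zero]

/-- If `f` is positively homogeneous of degree `s > 0`, take `r = 2` and `c = 2 ^ s`. -/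
theorem statement6_general [CompleteSpace E] {φ : V → ℂ} (hr : 1 < r) (hc : 1 < ‖c‖)
    (hf : ∀ x ≠ 0, ContDiffAt ℝ ∞ f x) (hf_hom : ∀ x, f (r • x) = c • f x)
    (hφ : ContDiff ℝ ∞ φ) (hφ_supp : HasCompactSupport φ) :
    Integrable (𝓕 fun x ↦ φ x • f x) ∧ MemWiener fun x ↦ φ x • f x := by
  obtain ⟨χ, hχφ⟩ := exists_contDiffBump_smul_eq_self hφ_supp
  have h_mem : MemWiener fun x ↦ φ x • f x := by
    have hχf := memWiener_smul_of_homogeneous hr hc hf hf_hom χ.contDiff χ.hasCompactSupport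
      χ.eventuallyEq_one
    convert (memWiener_of_contDiff hφ hφ_supp).smul hχf using 2 with x
    rw [smul_comm, ← smul_assoc, hχφ]
  exact ⟨h_mem.integrable_fourier
    (h_mem.continuous.integrable_of_hasCompactSupport hφ_supp.smul_right), h_mem⟩

end Homogeneous

end WienerAlgebra

/-- For `φ ∈ C_c^∞(ℝ^d)`, the function `F(x) = |x| φ(x)` has
integrable Fourier transform, and consequently `F` belongs to the Wiener
algebra `W_0(ℝ^d) = {ρ̂ : ρ ∈ L¹(ℝ^d)}`. -/
theorem statement6 (d : ℕ) (φ : EuclideanSpace ℝ (Fin d) → ℂ)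
    (hφ_smooth : ContDiff ℝ (⊤ : ℕ∞) φ) (hφ_supp : HasCompactSupport φ)
    (F : EuclideanSpace ℝ (Fin d) → ℂ) (hF : ∀ x, F x = (‖x‖ : ℂ) * φ x) :
    Integrable (𝓕 F) volume ∧
      ∃ ρ : EuclideanSpace ℝ (Fin d) → ℂ, Integrable ρ volume ∧ ∀ x, 𝓕 ρ x = F x := by
  have hF_eq : F = fun x ↦ φ x • (‖x‖ : ℂ) := funext fun x ↦ by rw [hF, smul_eq_mul, mul_comm]
  obtain ⟨h𝓕F, ρ, hρ, h𝓕ρ⟩ := statement6_general (r := 2) (c := 2) (by norm_num) (by norm_num)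
    (fun x hx ↦ Complex.ofRealCLM.contDiff.contDiffAt.comp x (contDiffAt_norm ℝ hx))
    (fun x ↦ by simp [norm_smul]) hφ_smooth hφ_supp
  exact ⟨hF_eq ▸ h𝓕F, ρ, hρ, congrFun (hF_eq ▸ h𝓕ρ)⟩
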